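/- Let k ≤ q and let C be the k-dimensional Reed-Solomon code of length q^2+1 over F_{q^2}. Then P(C) = {(g(a_1)+g(a_1)^q + c·a_1^{(q-k)(q+1)}, …, g(a_{q^2})+g(a_{q^2})^q + c·a_{q^2}^{(q-k)(q+1)}, c) : g ∈ F_{q^2}[X] with deg g ≤ (q-k)q - 1, c ∈ F_q}. -/

import Mathlib

open Polynomial

/-- The codeword of the (extended) `k`-dimensional Reed-Solomon code of length `q² + 1`
associated to a polynomial `f`: the evaluations of `f` at all elements of the field
(enumerated by `a`), followed by the coefficient of `X^(k-1)` in `f`. -/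
def rsWord (q k : ℕ) {F : Type} [Field F] (a : Fin (q ^ 2) → F)
    (f : Polynomial F) (i : Fin (q ^ 2 + 1)) : F :=
  if hi : (i : ℕ) < q ^ 2 then f.eval (a ⟨(i : ℕ), hi⟩) else f.coeff (k - 1)

/-- The puncture code `P(C)` of the `k`-dimensional Reed-Solomon code `C` of length `q² + 1`
over `F = 𝔽_{q²}`: all vectors `λ` with entries in the subfield `𝔽_q` (i.e. `λ_i^q = λ_i`)
such that `∑ λ_i u_i v_i^q = 0` for all codewords `u, v` of `C`. -/
def puncRS (q k : ℕ) {F : Type} [Field F] [Fintype F] (a : Fin (q ^ 2) → F) :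
    Set (Fin (q ^ 2 + 1) → F) :=
  {lam | (∀ i, lam i ^ q = lam i) ∧
    ∀ f g : Polynomial F, f.degree < (k : WithBot ℕ) → g.degree < (k : WithBot ℕ) →
      ∑ i, lam i * rsWord q k a f i * (rsWord q k a g i) ^ q = 0}

/-- The Hamming weight of a vector: the number of its nonzero coordinates. -/
noncomputable def wt {n : ℕ} {F : Type} [Zero F] (v : Fin n → F) : ℕ :=
  Set.ncard {i | v i ≠ 0}

/-!
Write `φ x = x ^ q` for the conjugation of `F` over `𝔽_q`. A polynomial of degree less than `q ^ 2`
sums over `F` to minus its coefficient of `X ^ (q ^ 2 - 1)`. Since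
`(q - k) * (q + 1) + (k - 1) * (q + 1) = q ^ 2 - 1`, the contribution of
`c * x ^ ((q - k) * (q + 1))` to the defining sums of `P(C)` cancels that of the last coordinate
`c`. Subtracting it leaves the `φ`-fixed functions `l` on `F` with
`∑ x, l x * f x * φ (g x) = 0` whenever `deg f, deg g < k`, and these have to be identified with
the functions `g + φ ∘ g`, `deg g < (q - k) * q`.

To find `g`, expand `l y = ∑ N u v * y ^ u * φ y ^ v` over `u, v < q`. The matrix `N` is Hermitian
because `l` is fixed by `φ`, and orthogonality kills the block `u, v ≥ q - k`. For `g` take the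
terms with `v < q - k`, those with also `u < q - k` multiplied by some `θ` with `θ + φ θ = 1`:
the rest of the expansion is `φ ∘ g`.
-/

namespace PunctureCode

section PowerSums

variable {F : Type*} [Field F] [Fintype F]

theorem sum_pow_card_sub_one : ∑ x : F, x ^ (Fintype.card F - 1) = -1 := by
  classical
  have hpos : Fintype.card F - 1 ≠ 0 := by
    have := Fintype.one_lt_card (α := F)
    omega
  have hpow (x : F) : x ^ (Fintype.card F - 1) = 1 - if x = 0 then 1 else 0 := by
    split_ifs with hx
    · simp [hx, hpos]
    · simp [FiniteField.pow_card_sub_one_eq_one x hx]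
  simp [hpow]

theorem sum_eval_eq_neg_coeff {P : F[X]} (hP : P.natDegree < Fintype.card F) :
    ∑ x : F, P.eval x = -P.coeff (Fintype.card F - 1) := by
  have hcard : Fintype.card F = Fintype.card F - 1 + 1 := by omega
  have hlow : ∀ i ∈ Finset.range (Fintype.card F - 1), P.coeff i * ∑ x : F, x ^ i = 0 := by
    intro i hi
    rw [FiniteField.sum_pow_lt_card_sub_one F i (Finset.mem_range.1 hi), mul_zero]
  simp_rw [eval_eq_sum_range' hP]
  rw [Finset.sum_comm]
  simp_rw [← Finset.mul_sum]
  rw [hcard, Finset.sum_range_succ, ← hcard, Finset.sum_eq_zero hlow, sum_pow_card_sub_one]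
  ring

theorem sub_mul_add_one_add_eq_sq_sub_one {q j : ℕ} (h : j < q) :
    (q - (j + 1)) * (q + 1) + (j + q * j) = q ^ 2 - 1 := by
  obtain ⟨d, rfl⟩ := Nat.exists_eq_add_of_le (Nat.succ_le_of_lt h)
  have hsq : (j + 1 + d) ^ 2 = d * (j + 1 + d + 1) + (j + (j + 1 + d) * j) + 1 := by ring
  simp [hsq]

theorem sum_eval_mul_eval_mul_eval_pow {q k : ℕ} (hk : k ≤ q) (hF : Fintype.card F = q ^ 2)
    {G f g : F[X]} (hG : G.natDegree ≤ (q - k) * (q + 1))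
    (hf : f.degree < (k : WithBot ℕ)) (hg : g.degree < (k : WithBot ℕ)) :
    ∑ x : F, G.eval x * f.eval x * g.eval x ^ q =
      -(G.coeff ((q - k) * (q + 1)) * (f.coeff (k - 1) * g.coeff (k - 1) ^ q)) := by
  rcases k with _ | j
  · obtain rfl : f = 0 := by simpa using hf
    simp
  have hf' : f.natDegree ≤ j := natDegree_le_of_degree_le (Order.le_of_lt_succ hf)
  have hg' : g.natDegree ≤ j := natDegree_le_of_degree_le (Order.le_of_lt_succ hg)
  have hgq : (g ^ q).natDegree ≤ q * j := natDegree_pow_le_of_le q hg'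
  have hfg : (f * g ^ q).natDegree ≤ j + q * j := natDegree_mul_le_of_le hf' hgq
  have hexp : (q - (j + 1)) * (q + 1) + (j + q * j) = Fintype.card F - 1 := by
    rw [hF, sub_mul_add_one_add_eq_sq_sub_one hk]
  have hdeg : (G * (f * g ^ q)).natDegree < Fintype.card F := by
    have := natDegree_mul_le_of_le hG hfg
    have := Fintype.card_pos (α := F)
    omega
  calc ∑ x : F, G.eval x * f.eval x * g.eval x ^ q
      = ∑ x : F, (G * (f * g ^ q)).eval x := by simp [mul_assoc]
    _ = -(G * (f * g ^ q)).coeff ((q - (j + 1)) * (q + 1) + (j + q * j)) := by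
        rw [sum_eval_eq_neg_coeff hdeg, hexp]
    _ = _ := by
        rw [coeff_mul_add_eq_of_natDegree_le hG hfg, coeff_mul_add_eq_of_natDegree_le hf' hgq,
          coeff_pow_of_natDegree_le hg', Nat.add_sub_cancel]

end PowerSums

section Conjugation

theorem exists_ringHom_eq_pow {F : Type*} [Field F] [Fintype F] {q n : ℕ} (hq : IsPrimePow q)
    (hF : Fintype.card F = q ^ n) : ∃ φ : F →+* F, ∀ x, φ x = x ^ q := by
  obtain ⟨p, m, hp, -, rfl⟩ := hq
  have : Fact p.Prime := ⟨hp.nat_prime⟩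
  have : CharP F p := charP_of_card_eq_prime_pow (f := m * n) (by rw [hF, pow_mul])
  have : ExpChar F p := ExpChar.prime hp.nat_prime
  exact ⟨iterateFrobenius F p m, iterateFrobenius_def p m⟩

theorem involutive_of_eq_pow {F : Type*} [Field F] [Fintype F] {q : ℕ}
    {φ : F →+* F} (hφ : ∀ x, φ x = x ^ q) (hF : Fintype.card F = q ^ 2) :
    Function.Involutive φ := by
  intro x
  rw [hφ, hφ, ← pow_mul, ← sq, ← hF, FiniteField.pow_card]

theorem map_pow_mul_add_one {R : Type*} [CommRing R] {q : ℕ} {φ : R →+* R}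
    (hφ : ∀ x, φ x = x ^ q) (hinv : Function.Involutive φ) (m : ℕ) (x : R) :
    φ (x ^ (m * (q + 1))) = x ^ (m * (q + 1)) := by
  rw [mul_comm, pow_mul, map_pow, pow_succ, map_mul, ← hφ, hinv, mul_comm]

theorem exists_pow_add_self_ne_zero {R : Type*} [CommRing R] [IsDomain R] [Fintype R] {q : ℕ}
    (hq : 1 < q) (hqR : q < Fintype.card R) : ∃ x : R, x ^ q + x ≠ 0 := by
  by_contra! hzero
  have hdeg : (X ^ q + X : R[X]).natDegree = q := by
    rw [natDegree_add_eq_left_of_natDegree_lt] <;> simp [hq]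
  have hpoly : (X ^ q + X : R[X]) = 0 :=
    eq_zero_of_natDegree_lt_card_of_eval_eq_zero _ Function.injective_id
      (fun x => by simpa using hzero x) (by rwa [hdeg])
  rw [hpoly, natDegree_zero] at hdeg
  omega

theorem exists_add_map_eq_one {F : Type*} [Field F] {φ : F →+* F} (hinv : Function.Involutive φ)
    {x : F} (hx : x + φ x ≠ 0) : ∃ θ : F, θ + φ θ = 1 := by
  refine ⟨x / (x + φ x), ?_⟩
  rw [map_div₀, map_add, hinv, add_comm (φ x) x, ← add_div, div_self hx]

end Conjugation

section HermitianForms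

variable {R : Type*} [CommRing R] {φ : R →+* R} {θ : R} {d q u v : ℕ} {N : ℕ → ℕ → R}

/-- The share of the entry `(u, v)` of a Hermitian matrix, with vanishing block `u, v ≥ d`, that
goes into the half supported on `v < d`; the rest is the conjugate of the share of `(v, u)`. -/
def halfWeight (θ : R) (d u v : ℕ) : R :=
  if v < d then if u < d then θ else 1 else 0

theorem halfWeight_eq_zero (hv : d ≤ v) : halfWeight θ d u v = 0 := by
  simp [halfWeight, hv.not_gt]

theorem halfWeight_add_map_halfWeight (hθ : θ + φ θ = 1) (huv : u < d ∨ v < d) :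
    halfWeight θ d u v + φ (halfWeight θ d v u) = 1 := by
  unfold halfWeight
  split_ifs with hv hu hu <;> simp_all

/-- The half of the Hermitian form `∑ N u v * y ^ u * φ y ^ v` supported on `v < d`, as a polynomial
in `y` with `φ y = y ^ q`. -/
noncomputable def halfPoly (θ : R) (d q : ℕ) (N : ℕ → ℕ → R) : R[X] :=
  ∑ u ∈ Finset.range q, ∑ v ∈ Finset.range q, C (halfWeight θ d u v * N u v) * X ^ (u + q * v)

theorem degree_halfPoly_lt (θ : R) (d q : ℕ) (N : ℕ → ℕ → R) :
    (halfPoly θ d q N).degree < ((d * q : ℕ) : WithBot ℕ) := by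
  rw [halfPoly, ← mem_degreeLT]
  refine Submodule.sum_mem _ fun u hu => Submodule.sum_mem _ fun v _ => ?_
  rcases lt_or_ge v d with hv | hv
  · have hexp : u + q * v < d * q := by
      have := Finset.mem_range.1 hu
      nlinarith
    exact mem_degreeLT.2 ((degree_C_mul_X_pow_le _ _).trans_lt (by exact_mod_cast hexp))
  · simp [halfWeight_eq_zero hv]

theorem eval_halfPoly (hφ : ∀ x, φ x = x ^ q) (N : ℕ → ℕ → R) (y : R) :
    (halfPoly θ d q N).eval y = ∑ u ∈ Finset.range q, ∑ v ∈ Finset.range q,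
      halfWeight θ d u v * N u v * (y ^ u * φ y ^ v) := by
  simp only [halfPoly, eval_finsetSum, eval_mul, eval_C, eval_pow, eval_X, hφ, pow_add, pow_mul]

theorem map_eval_halfPoly (hφ : ∀ x, φ x = x ^ q) (hinv : Function.Involutive φ)
    (hN : ∀ u v, φ (N u v) = N v u) (y : R) :
    φ ((halfPoly θ d q N).eval y) = ∑ u ∈ Finset.range q, ∑ v ∈ Finset.range q,
      φ (halfWeight θ d v u) * N u v * (y ^ u * φ y ^ v) := by
  rw [eval_halfPoly hφ]
  simp only [map_sum, map_mul, map_pow, hN, hinv y, mul_comm (φ y ^ _)]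
  exact Finset.sum_comm

theorem eval_halfPoly_add_map (hφ : ∀ x, φ x = x ^ q) (hinv : Function.Involutive φ)
    (hθ : θ + φ θ = 1) (hN : ∀ u v, φ (N u v) = N v u)
    (hblock : ∀ u < q, ∀ v < q, d ≤ u → d ≤ v → N u v = 0) (y : R) :
    (halfPoly θ d q N).eval y + φ ((halfPoly θ d q N).eval y) =
      ∑ u ∈ Finset.range q, ∑ v ∈ Finset.range q, N u v * (y ^ u * φ y ^ v) := by
  have hentry : ∀ u < q, ∀ v < q,
      (halfWeight θ d u v + φ (halfWeight θ d v u)) * N u v = N u v := by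
    intro u hu v hv
    by_cases huv : u < d ∨ v < d
    · rw [halfWeight_add_map_halfWeight hθ huv, one_mul]
    · push Not at huv
      rw [hblock u hu v hv huv.1 huv.2, mul_zero]
  rw [map_eval_halfPoly hφ hinv hN, eval_halfPoly hφ]
  simp only [← Finset.sum_add_distrib, ← add_mul]
  refine Finset.sum_congr rfl fun u hu => Finset.sum_congr rfl fun v hv => ?_
  rw [hentry u (Finset.mem_range.1 hu) v (Finset.mem_range.1 hv)]

end HermitianForms

section Interpolation

theorem geom_sum₂_mul_map_geom_sum₂ {R : Type*} [CommRing R] [IsDomain R] [DecidableEq R]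
    {φ : R →+* R} {q : ℕ} (hφ : ∀ x, φ x = x ^ q) (hinv : Function.Involutive φ)
    (hq : (q : R) = 0) (x y : R) :
    (∑ u ∈ Finset.range q, y ^ u * x ^ (q - 1 - u)) *
      φ (∑ u ∈ Finset.range q, y ^ u * x ^ (q - 1 - u)) = if x = y then 0 else 1 := by
  set S := ∑ u ∈ Finset.range q, y ^ u * x ^ (q - 1 - u) with hS
  split_ifs with hxy
  · have hS0 : S = 0 := by
      rw [hS, hxy, geom_sum₂_self, hq, zero_mul]
    rw [hS0, zero_mul]
  · have hsub : y - x ≠ 0 := sub_ne_zero.2 (Ne.symm hxy)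
    have hgeom : S * (y - x) = φ (y - x) := by
      rw [hS, geom_sum₂_mul, map_sub, hφ, hφ]
    have hgeom' : φ S * φ (y - x) = y - x := by
      rw [← map_mul, hgeom, hinv]
    apply mul_right_cancel₀ hsub
    calc S * φ S * (y - x) = φ S * (S * (y - x)) := by ring
      _ = 1 * (y - x) := by rw [hgeom, hgeom', one_mul]

variable {R : Type*} [CommRing R] [Fintype R] {φ : R →+* R} {l : R → R} {q k u v : ℕ}

/-- The moment of `l : R → R` against the monomial `x ^ s * φ x ^ t`. -/
def moment (φ : R →+* R) (l : R → R) (s t : ℕ) : R :=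
  ∑ x, l x * (x ^ s * φ x ^ t)

/-- The coefficient of `y ^ u * φ y ^ v` in the expansion of `l : R → R` over `u, v < q`, where
`φ x = x ^ q` and `R` is a field with `q ^ 2` elements. It is read off from
`l y = ∑ x, l x * (1 - (y - x) ^ (q ^ 2 - 1))`, where the `1` only enters for `u = v = 0`. -/
def interpCoeff (φ : R →+* R) (q : ℕ) (l : R → R) (u v : ℕ) : R :=
  (if u = 0 ∧ v = 0 then moment φ l 0 0 else 0) - moment φ l (q - 1 - u) (q - 1 - v)

theorem map_moment (hinv : Function.Involutive φ) (hl : ∀ x, φ (l x) = l x) (s t : ℕ) :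
    φ (moment φ l s t) = moment φ l t s := by
  simp only [moment, map_sum, map_mul, map_pow, hl, hinv _, mul_comm]

theorem map_interpCoeff (hinv : Function.Involutive φ) (hl : ∀ x, φ (l x) = l x) (u v : ℕ) :
    φ (interpCoeff φ q l u v) = interpCoeff φ q l v u := by
  simp only [interpCoeff, map_sub, apply_ite φ, map_zero, map_moment hinv hl,
    and_comm (a := u = 0)]

theorem interpCoeff_eq_zero (hmom : ∀ s < k, ∀ t < k, moment φ l s t = 0)
    (hu : u < q) (hv : v < q) (hku : q - k ≤ u) (hkv : q - k ≤ v) :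
    interpCoeff φ q l u v = 0 := by
  rw [interpCoeff, hmom 0 (by omega) 0 (by omega), hmom _ (by omega) _ (by omega)]
  simp

theorem sum_interpCoeff_mul {F : Type*} [Field F] [Fintype F] {φ : F →+* F}
    (hφ : ∀ x, φ x = x ^ q) (hF : Fintype.card F = q ^ 2) (l : F → F) (y : F) :
    ∑ u ∈ Finset.range q, ∑ v ∈ Finset.range q, interpCoeff φ q l u v * (y ^ u * φ y ^ v) =
      l y := by
  classical
  have hq0 : (q : F) = 0 := by
    have hcard : (q : F) ^ 2 = 0 := by exact_mod_cast hF ▸ FiniteField.cast_card_eq_zero F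
    exact eq_zero_of_pow_eq_zero hcard
  have hpos : 0 < q := Nat.pos_of_ne_zero fun h => by simp [h] at hF
  have hconst : ∑ u ∈ Finset.range q, ∑ v ∈ Finset.range q,
      (if u = 0 ∧ v = 0 then moment φ l 0 0 else 0) * (y ^ u * φ y ^ v) = ∑ x, l x := by
    simp [ite_and, hpos, moment]
  have hkernel : ∑ u ∈ Finset.range q, ∑ v ∈ Finset.range q,
      moment φ l (q - 1 - u) (q - 1 - v) * (y ^ u * φ y ^ v) =
        ∑ x, l x * if x = y then 0 else 1 := by
    simp_rw [← geom_sum₂_mul_map_geom_sum₂ hφ (involutive_of_eq_pow hφ hF) hq0,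
      map_sum, Finset.sum_mul_sum, Finset.mul_sum, moment, Finset.sum_mul]
    rw [Finset.sum_comm_cycle]
    refine Finset.sum_congr rfl fun x _ => Finset.sum_congr rfl fun u _ =>
      Finset.sum_congr rfl fun v _ => ?_
    rw [map_mul, map_pow, map_pow]
    ring
  simp_rw [interpCoeff, sub_mul, Finset.sum_sub_distrib]
  rw [hconst, hkernel, ← Finset.sum_sub_distrib, Finset.sum_eq_single y]
  · simp
  · intro x _ hxy
    simp [hxy]
  · simp

end Interpolation

section SesqOrthogonality

variable {R : Type*} [CommRing R] [Fintype R] {φ : R →+* R} {l : R → R} {k : ℕ}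

/-- Orthogonality of `l : R → R` to all products `f * φ g` of evaluations of polynomials `f, g` of
degree less than `k`: the condition that defines the puncture code, without the last coordinate. -/
def IsSesqOrthogonal (φ : R →+* R) (k : ℕ) (l : R → R) : Prop :=
  ∀ f g : R[X], f.degree < (k : WithBot ℕ) → g.degree < (k : WithBot ℕ) →
    ∑ x, l x * f.eval x * φ (g.eval x) = 0

theorem IsSesqOrthogonal.moment_eq_zero (h : IsSesqOrthogonal φ k l) {s t : ℕ} (hs : s < k)
    (ht : t < k) : moment φ l s t = 0 := by
  have hdeg {s : ℕ} (hs : s < k) : (X ^ s : R[X]).degree < (k : WithBot ℕ) :=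
    (degree_X_pow_le s).trans_lt (by exact_mod_cast hs)
  simpa [moment, mul_assoc] using h (X ^ s) (X ^ t) (hdeg hs) (hdeg ht)

theorem IsSesqOrthogonal.add_map (hinv : Function.Involutive φ) (h : IsSesqOrthogonal φ k l) :
    IsSesqOrthogonal φ k fun x => l x + φ (l x) := by
  intro f g hf hg
  have hconj : ∑ x, φ (l x) * f.eval x * φ (g.eval x) = 0 := by
    calc ∑ x, φ (l x) * f.eval x * φ (g.eval x)
        = φ (∑ x, l x * g.eval x * φ (f.eval x)) := by
          rw [map_sum]
          refine Finset.sum_congr rfl fun x _ => ?_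
          rw [map_mul, map_mul, hinv, mul_right_comm]
      _ = 0 := by rw [h g f hg hf, map_zero]
  simp_rw [add_mul, Finset.sum_add_distrib, h f g hf hg, hconj, add_zero]

variable {F : Type*} [Field F] [Fintype F] {φ : F →+* F} {l : F → F} {q k : ℕ}

theorem isSesqOrthogonal_eval (hφ : ∀ x, φ x = x ^ q) (hF : Fintype.card F = q ^ 2) (hk : k ≤ q)
    {g : F[X]} (hg : g.degree < (((q - k) * q : ℕ) : WithBot ℕ)) :
    IsSesqOrthogonal φ k fun x => g.eval x := by
  intro f₁ f₂ hf₁ hf₂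
  have hle : (q - k) * q ≤ (q - k) * (q + 1) := Nat.mul_le_mul_left _ q.le_succ
  have hdeg : g.degree < (((q - k) * (q + 1) : ℕ) : WithBot ℕ) :=
    hg.trans_le (by exact_mod_cast hle)
  simp_rw [hφ]
  rw [sum_eval_mul_eval_mul_eval_pow hk hF (natDegree_le_of_degree_le hdeg.le) hf₁ hf₂,
    coeff_eq_zero_of_degree_lt hdeg, zero_mul, neg_zero]

theorem fixed_and_isSesqOrthogonal_iff_exists_eval_add_map (hφ : ∀ x, φ x = x ^ q)
    (hF : Fintype.card F = q ^ 2) (hk : k ≤ q) :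
    ((∀ x, φ (l x) = l x) ∧ IsSesqOrthogonal φ k l) ↔
      ∃ g : F[X], g.degree < (((q - k) * q : ℕ) : WithBot ℕ) ∧
        ∀ x, l x = g.eval x + φ (g.eval x) := by
  have hinv : Function.Involutive φ := involutive_of_eq_pow hφ hF
  constructor
  · rintro ⟨hl, horth⟩
    have hq : 1 < q := (one_lt_pow_iff two_ne_zero).1 (hF ▸ Fintype.one_lt_card)
    obtain ⟨x, hx⟩ := exists_pow_add_self_ne_zero (R := F) hq (hF ▸ lt_self_pow₀ hq one_lt_two)
    obtain ⟨θ, hθ⟩ := exists_add_map_eq_one hinv (x := x) (by rwa [hφ, add_comm])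
    have hblock : ∀ u < q, ∀ v < q, q - k ≤ u → q - k ≤ v → interpCoeff φ q l u v = 0 :=
      fun u hu v hv => interpCoeff_eq_zero (fun s hs t ht => horth.moment_eq_zero hs ht) hu hv
    refine ⟨halfPoly θ (q - k) q (interpCoeff φ q l), degree_halfPoly_lt _ _ _ _, fun y => ?_⟩
    rw [eval_halfPoly_add_map hφ hinv hθ (map_interpCoeff hinv hl) hblock,
      sum_interpCoeff_mul hφ hF]
  · rintro ⟨g, hg, hl⟩
    obtain rfl : l = fun x => g.eval x + φ (g.eval x) := funext hl
    exact ⟨fun x => by rw [map_add, hinv, add_comm],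
      (isSesqOrthogonal_eval hφ hF hk hg).add_map hinv⟩

end SesqOrthogonality

section ExtendedWords

/-- The word of length `n + 1` formed by the values of `l` at the points `a i`, followed by `c`. -/
def extWord {F : Type*} {n : ℕ} (a : Fin n → F) (l : F → F) (c : F) (i : Fin (n + 1)) : F :=
  if hi : (i : ℕ) < n then l (a ⟨i, hi⟩) else c

@[simp]
theorem extWord_castSucc {F : Type*} {n : ℕ} (a : Fin n → F) (l : F → F) (c : F) (i : Fin n) :
    extWord a l c i.castSucc = l (a i) := by
  simp [extWord]

@[simp]
theorem extWord_last {F : Type*} {n : ℕ} (a : Fin n → F) (l : F → F) (c : F) :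
    extWord a l c (Fin.last n) = c := by
  simp [extWord]

theorem exists_eq_extWord {F : Type*} {n : ℕ} {a : Fin n → F} (ha : Function.Injective a)
    (v : Fin (n + 1) → F) : ∃ l c, v = extWord a l c := by
  refine ⟨Function.extend a (fun i => v i.castSucc) fun _ => v (Fin.last n), v (Fin.last n),
    funext fun i => ?_⟩
  cases i using Fin.lastCases <;> simp [ha.extend_apply]

theorem extWord_inj {F : Type*} {n : ℕ} {a : Fin n → F} (ha : Function.Surjective a)
    {l l' : F → F} {c c' : F} : extWord a l c = extWord a l' c' ↔ (∀ x, l x = l' x) ∧ c = c' := by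
  simp [funext_iff, Fin.forall_fin_succ', ha.forall]

variable {F : Type} [Field F] [Fintype F] {φ : F →+* F} {q k : ℕ} {a : Fin (q ^ 2) → F}

theorem sum_extWord_mul_rsWord_mul_rsWord_pow (ha : Function.Bijective a) (l : F → F) (c : F)
    (f g : F[X]) :
    ∑ i, extWord a l c i * rsWord q k a f i * rsWord q k a g i ^ q =
      ∑ x, l x * f.eval x * g.eval x ^ q + c * (f.coeff (k - 1) * g.coeff (k - 1) ^ q) := by
  rw [Fin.sum_univ_castSucc, ← ha.sum_comp fun x => l x * f.eval x * g.eval x ^ q]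
  simp [rsWord, mul_assoc]

theorem sum_sub_mul_pow_mul_eval_mul_eval_pow (hk : k ≤ q) (hF : Fintype.card F = q ^ 2)
    (l : F → F) (c : F) {f g : F[X]}
    (hf : f.degree < (k : WithBot ℕ)) (hg : g.degree < (k : WithBot ℕ)) :
    ∑ x, (l x - c * x ^ ((q - k) * (q + 1))) * f.eval x * g.eval x ^ q =
      ∑ x, l x * f.eval x * g.eval x ^ q + c * (f.coeff (k - 1) * g.coeff (k - 1) ^ q) := by
  have hnorm := sum_eval_mul_eval_mul_eval_pow hk hF
    (natDegree_X_pow_le ((q - k) * (q + 1))) hf hg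
  simp only [eval_pow, eval_X, coeff_X_pow_self, one_mul] at hnorm
  simp_rw [sub_mul, Finset.sum_sub_distrib, mul_assoc c, ← Finset.mul_sum, hnorm]
  ring

theorem extWord_mem_puncRS_iff (hφ : ∀ x, φ x = x ^ q) (hF : Fintype.card F = q ^ 2) (hk : k ≤ q)
    (ha : Function.Bijective a) (l : F → F) {c : F} :
    extWord a l c ∈ puncRS q k a ↔
      ((∀ x, φ (l x - c * x ^ ((q - k) * (q + 1))) = l x - c * x ^ ((q - k) * (q + 1))) ∧
        IsSesqOrthogonal φ k fun x => l x - c * x ^ ((q - k) * (q + 1))) ∧ c ^ q = c := by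
  have hword : (∀ i, extWord a l c i ^ q = extWord a l c i) ↔ (∀ x, l x ^ q = l x) ∧ c ^ q = c := by
    simp [Fin.forall_fin_succ', ha.surjective.forall]
  have horth : IsSesqOrthogonal φ k (fun x => l x - c * x ^ ((q - k) * (q + 1))) ↔
      ∀ f g : F[X], f.degree < (k : WithBot ℕ) → g.degree < (k : WithBot ℕ) →
        ∑ i, extWord a l c i * rsWord q k a f i * rsWord q k a g i ^ q = 0 := by
    refine forall₄_congr fun f g hf hg => ?_
    simp_rw [hφ, sum_sub_mul_pow_mul_eval_mul_eval_pow hk hF l c hf hg,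
      sum_extWord_mul_rsWord_mul_rsWord_pow ha]
  have hfixed (hc : c ^ q = c) (x : F) : φ (l x - c * x ^ ((q - k) * (q + 1))) =
      l x - c * x ^ ((q - k) * (q + 1)) ↔ l x ^ q = l x := by
    rw [map_sub, map_mul, map_pow_mul_add_one hφ (involutive_of_eq_pow hφ hF), hφ c, hc, hφ,
      sub_left_inj]
  rw [puncRS, Set.mem_ofPred_eq, hword, horth]
  constructor
  · rintro ⟨⟨hl, hc⟩, h⟩
    exact ⟨⟨fun x => (hfixed hc x).2 (hl x), h⟩, hc⟩
  · rintro ⟨⟨hl, h⟩, hc⟩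
    exact ⟨⟨fun x => (hfixed hc x).1 (hl x), hc⟩, h⟩

end ExtendedWords

end PunctureCode

/-- Let `k ≤ q` and let `C` be the `k`-dimensional Reed-Solomon code of
length `q² + 1` over `𝔽_{q²}`.  Then `P(C)` is exactly the set of vectors
`(g(a_1) + g(a_1)^q + c·a_1^{(q-k)(q+1)}, …, g(a_{q²}) + g(a_{q²})^q + c·a_{q²}^{(q-k)(q+1)}, c)`
where `g ∈ 𝔽_{q²}[X]` has degree at most `(q-k)q - 1` and `c ∈ 𝔽_q`. -/
theorem puncture_code_of_RS_eq_trace_evaluations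
    (q k : ℕ) (hq : IsPrimePow q) (hk : k ≤ q)
    (F : Type) [Field F] [Fintype F] (hF : Fintype.card F = q ^ 2)
    (a : Fin (q ^ 2) → F) (ha : Function.Bijective a) :
    puncRS q k a =
      {v : Fin (q ^ 2 + 1) → F | ∃ (g : Polynomial F) (c : F),
        g.degree < (((q - k) * q : ℕ) : WithBot ℕ) ∧ c ^ q = c ∧
        v = fun i : Fin (q ^ 2 + 1) =>
          if hi : (i : ℕ) < q ^ 2 then
            g.eval (a ⟨(i : ℕ), hi⟩) + (g.eval (a ⟨(i : ℕ), hi⟩)) ^ q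
              + c * (a ⟨(i : ℕ), hi⟩) ^ ((q - k) * (q + 1))
          else c} := by
  obtain ⟨φ, hφ⟩ := PunctureCode.exists_ringHom_eq_pow hq hF
  ext v
  obtain ⟨l, c, rfl⟩ := PunctureCode.exists_eq_extWord ha.injective v
  rw [PunctureCode.extWord_mem_puncRS_iff hφ hF hk ha,
    PunctureCode.fixed_and_isSesqOrthogonal_iff_exists_eval_add_map hφ hF hk]
  constructor
  · rintro ⟨⟨g, hg, hl⟩, hc⟩
    obtain rfl : l = fun x => g.eval x + g.eval x ^ q + c * x ^ ((q - k) * (q + 1)) :=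
      funext fun x => by rw [← hφ, ← hl, sub_add_cancel]
    exact ⟨g, c, hg, hc, rfl⟩
  · rintro ⟨g, c', hg, hc, hv⟩
    obtain ⟨hl, rfl⟩ := (PunctureCode.extWord_inj (l' := fun x => g.eval x + g.eval x ^ q +
      c' * x ^ ((q - k) * (q + 1))) ha.surjective).1 hv
    exact ⟨⟨g, hg, fun x => by rw [hl, hφ, add_sub_cancel_right]⟩, hc⟩
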